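/- For every integer n ≥ 4 there exists a unique function μ₂ : (0,∞) → ℝ that is twice continuously differentiable, positive, satisfies μ₂''(y) + (y/2) μ₂'(y) + ε μ₂(y) = (2 μ₁(y) μ₂(y))^n for all y > 0, y^δ μ₂(y) → λ as y → 0⁺, and y^{2ε} μ₂(y) → 0 as y → ∞. -/

import Mathlib

noncomputable def kap : ℝ := 1 / Real.sqrt Real.pi

noncomputable def eps (n : ℕ) : ℝ := 1 / ((n : ℝ) - 1)

noncomputable def del (n : ℕ) : ℝ := ((n : ℝ) + 2) / ((n : ℝ) - 1)

noncomputable def lam (n : ℕ) : ℝ :=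
  (del n * (del n + 1) / (2 * kap) ^ n) ^ (1 / ((n : ℝ) - 1))

/-- μ₁(y) = erf(y/2). -/
noncomputable def mu1 (y : ℝ) : ℝ :=
  (2 / Real.sqrt Real.pi) * ∫ σ in (0:ℝ)..(y / 2), Real.exp (-σ ^ 2)

/-- The diffusive profile: positive, C² on (0,∞), satisfies
μ₂'' + (y/2)μ₂' + εμ₂ = (2μ₁μ₂)ⁿ, y^δ μ₂(y) → λ as y → 0⁺, y^{2ε} μ₂(y) → 0 as y → ∞. -/
def IsDiffusiveProfile (n : ℕ) (μ : ℝ → ℝ) : Prop :=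
  ContDiffOn ℝ 2 μ (Set.Ioi 0) ∧
  (∀ y ∈ Set.Ioi (0:ℝ), 0 < μ y) ∧
  (∀ y ∈ Set.Ioi (0:ℝ),
    deriv (deriv μ) y + y / 2 * deriv μ y + eps n * μ y = (2 * mu1 y * μ y) ^ n) ∧
  Filter.Tendsto (fun y : ℝ => y ^ del n * μ y) (nhdsWithin 0 (Set.Ioi 0)) (nhds (lam n)) ∧
  Filter.Tendsto (fun y : ℝ => y ^ (2 * eps n) * μ y) Filter.atTop (nhds 0)

/-!
Uniqueness comes from the superlinearity of `x ↦ x ^ n`: if `u` and `w` are profiles, the ratio of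
`u` to a slightly enlarged `w` is asymptotically at most `1` at `0` and at infinity, and it cannot
have an interior maximum above `1`. Since only the decay `o(y ^ (-2ε))` is prescribed at infinity,
`w` is enlarged by a small multiple of a positive supersolution of the linear equation that decays
exactly like `y ^ (-2ε)`; it exists because `ε < 1/2`.

For existence, `y ↦ λ y ^ (-δ) exp (-y ^ 2 / 4)` is a subsolution, and adding
`N exp (-y ^ 2 / 4)` with `N` large gives a supersolution. Substituting
`u = y ^ (-m) exp (-y ^ 2 / 4) V` with `m` large turns the equation into `-(V' / A)' = g(·, V)`
with `A > 0` and `g` increasing in `V` between the barriers. Hence the Green operator is order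
preserving, and the Knaster–Tarski theorem yields a fixed point between the barriers. The barriers
agree to leading order at `0` and decay rapidly, so the fixed point has both prescribed limits.
-/

open Set Filter Topology MeasureTheory
open scoped Real

/-- The operator `u ↦ u'' + a u' + b u` on functions of one real variable. -/
noncomputable def ellipticOp (a b u : ℝ → ℝ) (y : ℝ) : ℝ :=
  deriv (deriv u) y + a y * deriv u y + b y * u y

/-- The linear part `u ↦ u'' + (y/2) u' + ε u` of the profile equation. -/
noncomputable abbrev similarityOp (ε : ℝ) : (ℝ → ℝ) → ℝ → ℝ :=
  ellipticOp (fun y => y / 2) (fun _ => ε)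

lemma ellipticOp_of_hasDerivAt {a b u u' : ℝ → ℝ} {u'' y : ℝ}
    (hu : ∀ᶠ x in 𝓝 y, HasDerivAt u (u' x) x) (hu' : HasDerivAt u' u'' y) :
    ellipticOp a b u y = u'' + a y * u' y + b y * u y := by
  have h : deriv u =ᶠ[𝓝 y] u' := hu.mono fun x hx => hx.deriv
  rw [ellipticOp, h.deriv_eq, hu'.deriv, h.eq_of_nhds]

lemma ellipticOp_add_smul (a b : ℝ → ℝ) {u w : ℝ → ℝ} {y : ℝ} (c : ℝ)
    (hu : ContDiffAt ℝ 2 u y) (hw : ContDiffAt ℝ 2 w y) :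
    ellipticOp a b (u + c • w) y = ellipticOp a b u y + c * ellipticOp a b w y := by
  have hasDeriv {f : ℝ → ℝ} (hf : ContDiffAt ℝ 2 f y) : ∀ᶠ x in 𝓝 y, HasDerivAt f (deriv f x) x :=
    (hf.eventually (by simp)).mono fun x hx => (hx.differentiableAt two_ne_zero).hasDerivAt
  have hasDeriv' {f : ℝ → ℝ} (hf : ContDiffAt ℝ 2 f y) :
      HasDerivAt (deriv f) (deriv (deriv f) y) y :=
    ((hf.derivWithin (m := 1) (by norm_num)).differentiableAt one_ne_zero).hasDerivAt
  rw [ellipticOp_of_hasDerivAt (u' := deriv u + c • deriv w)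
    (((hasDeriv hu).and (hasDeriv hw)).mono fun x hx => hx.1.add (hx.2.const_smul c))
    ((hasDeriv' hu).add ((hasDeriv' hw).const_smul c))]
  simp only [ellipticOp, Pi.add_apply, Pi.smul_apply, smul_eq_mul]
  ring

lemma deriv_deriv_nonpos_of_isLocalMax {f : ℝ → ℝ} {x : ℝ} (hmax : IsLocalMax f x)
    (hf : ContinuousAt f x) : deriv (deriv f) x ≤ 0 := by
  by_contra! hpos
  have hmin : IsLocalMin f x := isLocalMin_of_deriv_deriv_pos hpos hmax.deriv_eq_zero hf
  have hconst : f =ᶠ[𝓝 x] fun _ => f x := by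
    filter_upwards [hmax, hmin] with z h₁ h₂ using le_antisymm h₁ h₂
  simp [hconst.deriv.deriv_eq] at hpos

lemma ellipticOp_nonpos_of_isLocalMax (a b : ℝ → ℝ) {v : ℝ → ℝ} {y : ℝ} (hmax : IsLocalMax v y)
    (hv : ContinuousAt v y) (hzero : v y = 0) : ellipticOp a b v y ≤ 0 := by
  simpa [ellipticOp, hmax.deriv_eq_zero, hzero] using deriv_deriv_nonpos_of_isLocalMax hmax hv

lemma exists_forall_le_of_eventually_le {r : ℝ → ℝ} {y₀ : ℝ} (hr : ContinuousOn r (Ioi 0))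
    (hy₀ : 0 < y₀) (h_zero : ∀ᶠ y in 𝓝[>] 0, r y ≤ r y₀) (h_top : ∀ᶠ y in atTop, r y ≤ r y₀) :
    ∃ c > 0, ∀ y > 0, r y ≤ r c := by
  have hcont : Continuous (r ∘ Real.exp) :=
    hr.comp_continuous Real.continuous_exp fun x => Real.exp_pos x
  have hcocompact : ∀ᶠ x in cocompact ℝ, (r ∘ Real.exp) x ≤ (r ∘ Real.exp) (Real.log y₀) := by
    rw [cocompact_eq_atBot_atTop, eventually_sup]
    simp only [Function.comp_apply, Real.exp_log hy₀]
    exact ⟨Real.tendsto_exp_atBot_nhdsGT.eventually h_zero, Real.tendsto_exp_atTop.eventually h_top⟩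
  obtain ⟨x, hx⟩ := hcont.exists_forall_ge' _ hcocompact
  refine ⟨Real.exp x, Real.exp_pos x, fun y hy => ?_⟩
  simpa [Real.exp_log hy] using hx (Real.log y)

/-- Where the ratio `u / F` has a maximum `θ > 1`, the function `u - θ F` touches `0` from below,
and superlinearity of `f` contradicts the two differential inequalities. -/
theorem le_of_superlinear {a b u F : ℝ → ℝ} {f : ℝ → ℝ → ℝ}
    (hu : ContDiffOn ℝ 2 u (Ioi 0)) (hF : ContDiffOn ℝ 2 F (Ioi 0)) (hFpos : ∀ y > 0, 0 < F y)
    (hsuperlinear : ∀ y > 0, ∀ x > 0, ∀ θ > 1, θ * f y x < f y (θ * x))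
    (hsub : ∀ y > 0, f y (u y) ≤ ellipticOp a b u y)
    (hsuper : ∀ y > 0, ellipticOp a b F y ≤ f y (F y))
    (h_zero : ∀ θ > 1, ∀ᶠ y in 𝓝[>] 0, u y ≤ θ * F y)
    (h_top : ∀ θ > 1, ∀ᶠ y in atTop, u y ≤ θ * F y) {y : ℝ} (hy : 0 < y) : u y ≤ F y := by
  by_contra! hlt
  have hratio : 1 < u y / F y := (one_lt_div (hFpos y hy)).2 hlt
  obtain ⟨c, hc, hcmax⟩ := exists_forall_le_of_eventually_le (r := fun x => u x / F x)
    (hu.continuousOn.div hF.continuousOn fun x hx => (hFpos x hx).ne') hy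
    (by
      filter_upwards [h_zero _ hratio, self_mem_nhdsWithin] with x hx hx0
      exact (div_le_iff₀ (hFpos x hx0)).2 hx)
    (by
      filter_upwards [h_top _ hratio, eventually_gt_atTop 0] with x hx hx0
      exact (div_le_iff₀ (hFpos x hx0)).2 hx)
  obtain ⟨θ, hθ⟩ : ∃ θ, θ = u c / F c := ⟨_, rfl⟩
  have hθ1 : 1 < θ := hθ ▸ hratio.trans_le (hcmax y hy)
  have htouch : u c = θ * F c := ((eq_div_iff (hFpos c hc).ne').1 hθ).symm
  have hu_c := hu.contDiffAt (Ioi_mem_nhds hc)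
  have hF_c := hF.contDiffAt (Ioi_mem_nhds hc)
  have hmax : IsLocalMax (u + (-θ) • F) c := by
    filter_upwards [Ioi_mem_nhds hc] with x hx
    have := (div_le_iff₀ (hFpos x hx)).1 (hθ ▸ hcmax x hx)
    simp [htouch, this]
  have hop := ellipticOp_nonpos_of_isLocalMax a b hmax
    (hu_c.continuousAt.add (hF_c.continuousAt.const_smul _)) (by simp [htouch])
  rw [ellipticOp_add_smul a b _ hu_c hF_c] at hop
  have : f c (θ * F c) < f c (θ * F c) := calc
    f c (θ * F c) = f c (u c) := by rw [htouch]
    _ ≤ ellipticOp a b u c := hsub c hc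
    _ ≤ θ * ellipticOp a b F c := by linarith
    _ ≤ θ * f c (F c) := by gcongr; exact hsuper c hc
    _ < f c (θ * F c) := hsuperlinear c hc _ (hFpos c hc) θ hθ1
  exact this.false

lemma ellipticOp_exp_neg {a b φ φ' : ℝ → ℝ} {φ'' y : ℝ} (hφ : ∀ x, HasDerivAt φ (φ' x) x)
    (hφ' : HasDerivAt φ' φ'' y) :
    ellipticOp a b (fun x => Real.exp (-φ x)) y =
      Real.exp (-φ y) * (φ' y ^ 2 - φ'' - a y * φ' y + b y) := by
  have hexp (x : ℝ) : HasDerivAt (fun x => Real.exp (-φ x)) (Real.exp (-φ x) * -φ' x) x :=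
    (hφ x).neg.exp
  rw [ellipticOp_of_hasDerivAt (.of_forall hexp) ((hexp y).mul hφ'.neg)]
  ring

/-- The exponent `φ` of the slowly decaying supersolution `exp (-φ)` of `similarityOp ε`. The
logarithm produces the decay `y ^ (-2ε)`; the arctangent, for large `B`, makes the
supersolution inequality hold for bounded `y` as well. -/
noncomputable def slowExponent (ε B y : ℝ) : ℝ :=
  ε / 2 * Real.log (y ^ 4 + B ^ 2) + B / 4 * Real.arctan (y ^ 2 / B)

lemma contDiff_slowExponent (ε : ℝ) {B : ℝ} (hB : 0 < B) : ContDiff ℝ 2 (slowExponent ε B) := by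
  have hlog : ContDiff ℝ 2 fun y : ℝ => Real.log (y ^ 4 + B ^ 2) :=
    ContDiff.log (by fun_prop) fun y => by positivity
  have harctan : ContDiff ℝ 2 fun y : ℝ => Real.arctan (y ^ 2 / B) := ContDiff.arctan (by fun_prop)
  exact (contDiff_const.mul hlog).add (contDiff_const.mul harctan)

lemma hasDerivAt_slowExponent (ε : ℝ) {B : ℝ} (hB : 0 < B) (y : ℝ) :
    HasDerivAt (slowExponent ε B)
      ((2 * ε * y ^ 3 + B ^ 2 / 2 * y) / (y ^ 4 + B ^ 2)) y := by
  have hD : y ^ 4 + B ^ 2 ≠ 0 := by positivity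
  have hlog := (((hasDerivAt_pow 4 y).add_const (B ^ 2)).log hD).const_mul (ε / 2)
  have harctan := ((hasDerivAt_pow 2 y).div_const B).arctan.const_mul (B / 4)
  refine (hlog.add harctan).congr_deriv ?_
  have : 1 + (y ^ 2 / B) ^ 2 = (y ^ 4 + B ^ 2) / B ^ 2 := by field_simp; ring
  rw [this]
  field_simp
  push_cast
  ring

lemma slowPolynomial_nonpos {ε b t : ℝ} (h0 : 0 ≤ ε) (hε : ε < 1 / 2) (hb : 8 ≤ b)
    (hb' : 256 ≤ b * (1 - 2 * ε)) (ht : 0 ≤ t) :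
    -(b / 2 - 4 * ε ^ 2 - 2 * ε) * t ^ 3 + (3 + 6 * ε) * b * t ^ 2 - 12 * ε * b * t
      - 2 * b ^ 2 * (1 - 2 * ε) ≤ 0 := by
  have hcube : b / 4 * t ^ 3 ≤ (b / 2 - 4 * ε ^ 2 - 2 * ε) * t ^ 3 := by
    gcongr; nlinarith
  have hsq : (3 + 6 * ε) * b * t ^ 2 ≤ 6 * b * t ^ 2 := by
    gcongr; linarith
  have hlin : 0 ≤ 12 * ε * b * t := by positivity
  have hconst : 512 * b ≤ 2 * b ^ 2 * (1 - 2 * ε) := by nlinarith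
  have htangent : 0 ≤ b * ((t - 16) ^ 2 * (t + 8)) := by positivity
  linarith

lemma similarityOp_exp_neg_slowExponent_nonpos {ε B : ℝ} (h0 : 0 ≤ ε) (hε : ε < 1 / 2)
    (hB : 4 ≤ B) (hB' : 512 ≤ B ^ 2 * (1 - 2 * ε)) (y : ℝ) :
    similarityOp ε (fun x => Real.exp (-slowExponent ε B x)) y ≤ 0 := by
  have hD : 0 < y ^ 4 + B ^ 2 := by positivity
  have hnum : HasDerivAt (fun y => 2 * ε * y ^ 3 + B ^ 2 / 2 * y) (6 * ε * y ^ 2 + B ^ 2 / 2) y :=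
    (((hasDerivAt_pow 3 y).const_mul (2 * ε)).add
      ((hasDerivAt_id y).const_mul (B ^ 2 / 2))).congr_deriv (by push_cast; ring)
  have hden : HasDerivAt (fun y => y ^ 4 + B ^ 2) (4 * y ^ 3) y := by
    simpa using (hasDerivAt_pow 4 y).add_const (B ^ 2)
  rw [similarityOp, ellipticOp_exp_neg (hasDerivAt_slowExponent ε (by linarith))
    (hnum.fun_div hden hD.ne')]
  refine mul_nonpos_of_nonneg_of_nonpos (Real.exp_pos _).le ?_
  have hpoly := slowPolynomial_nonpos (b := B ^ 2 / 2) h0 hε (by nlinarith) (by linarith)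
    (sq_nonneg y)
  refine le_of_eq_of_le ?_ (div_nonpos_of_nonpos_of_nonneg hpoly (sq_nonneg (y ^ 4 + B ^ 2)))
  field_simp
  ring

lemma slowExponent_le {ε B y : ℝ} (h0 : 0 ≤ ε) (hB : 0 < B) (hy : B ≤ y ^ 2) (hy0 : 0 < y) :
    slowExponent ε B y ≤ ε / 2 * Real.log 2 + B / 4 * (π / 2) + 2 * ε * Real.log y := by
  have hlog : Real.log (y ^ 4 + B ^ 2) ≤ Real.log 2 + 4 * Real.log y := calc
    Real.log (y ^ 4 + B ^ 2) ≤ Real.log (2 * y ^ 4) := by gcongr; nlinarith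
    _ = Real.log 2 + 4 * Real.log y := by
      rw [Real.log_mul two_ne_zero (by positivity), Real.log_pow]; norm_num
  calc slowExponent ε B y
      ≤ ε / 2 * (Real.log 2 + 4 * Real.log y) + B / 4 * (π / 2) := by
        unfold slowExponent
        gcongr
        exact (Real.arctan_lt_pi_div_two _).le
    _ = ε / 2 * Real.log 2 + B / 4 * (π / 2) + 2 * ε * Real.log y := by ring

lemma exists_slow_supersolution {ε : ℝ} (h0 : 0 ≤ ε) (hε : ε < 1 / 2) :
    ∃ p : ℝ → ℝ, ContDiff ℝ 2 p ∧ (∀ y, 0 < p y) ∧ (∀ y, similarityOp ε p y ≤ 0) ∧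
      ∃ c > 0, ∀ᶠ y in atTop, c ≤ y ^ (2 * ε) * p y := by
  have hgap : 0 < 1 - 2 * ε := by linarith
  obtain ⟨B, hB4, hB⟩ : ∃ B : ℝ, 4 ≤ B ∧ 512 ≤ B ^ 2 * (1 - 2 * ε) := by
    have hB : 512 ≤ 512 / (1 - 2 * ε) := (le_div_iff₀ hgap).2 (by linarith)
    have hmul : 512 / (1 - 2 * ε) * (1 - 2 * ε) = 512 := div_mul_cancel₀ _ hgap.ne'
    exact ⟨512 / (1 - 2 * ε), by linarith, by rw [sq, mul_assoc, hmul]; linarith⟩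
  have hB0 : 0 < B := by linarith
  refine ⟨fun y => Real.exp (-slowExponent ε B y), (contDiff_slowExponent ε hB0).neg.exp,
    fun y => Real.exp_pos _, similarityOp_exp_neg_slowExponent_nonpos h0 hε hB4 hB,
    Real.exp (-(ε / 2 * Real.log 2 + B / 4 * (π / 2))), Real.exp_pos _, ?_⟩
  filter_upwards [eventually_ge_atTop B] with y hy
  have hy0 : 0 < y := hB0.trans_le hy
  have := slowExponent_le h0 hB0 (show B ≤ y ^ 2 by nlinarith) hy0
  rw [Real.rpow_def_of_pos hy0, ← Real.exp_add, Real.exp_le_exp]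
  linarith

lemma kap_pos : 0 < kap := by
  unfold kap; positivity

lemma eps_pos {n : ℕ} (hn : 1 < n) : 0 < eps n :=
  one_div_pos.2 (sub_pos.2 (by exact_mod_cast hn))

lemma eps_le_one_third {n : ℕ} (hn : 4 ≤ n) : eps n ≤ 1 / 3 := by
  have : (4 : ℝ) ≤ n := by exact_mod_cast hn
  exact one_div_le_one_div_of_le three_pos (by linarith)

lemma del_eq {n : ℕ} (hn : 1 < n) : del n = 1 + 3 * eps n := by
  have : (n : ℝ) - 1 ≠ 0 := sub_ne_zero.2 (by exact_mod_cast hn.ne')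
  unfold del eps
  field_simp
  ring

lemma del_pos {n : ℕ} (hn : 1 < n) : 0 < del n := by
  have := eps_pos hn
  rw [del_eq hn]; positivity

lemma lam_pos {n : ℕ} (hn : 1 < n) : 0 < lam n := by
  have := kap_pos
  have := del_pos hn
  unfold lam; positivity

/-- `y ↦ λ y ^ (-δ)` solves `u'' = (2 κ y u) ^ n`. -/
lemma two_kap_mul_lam_rpow_pow {n : ℕ} (hn : 1 < n) {y : ℝ} (hy : 0 < y) :
    (2 * kap * y * (lam n * y ^ (-del n))) ^ n =
      del n * (del n + 1) / y ^ 2 * (lam n * y ^ (-del n)) := by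
  have hn1 : (n : ℝ) - 1 ≠ 0 := sub_ne_zero.2 (by exact_mod_cast hn.ne')
  have hδ := del_pos hn
  have hκ := kap_pos
  have hlam : lam n ^ n = del n * (del n + 1) / (2 * kap) ^ n * lam n := by
    have h : 0 < del n * (del n + 1) / (2 * kap) ^ n := by positivity
    calc lam n ^ n = (del n * (del n + 1) / (2 * kap) ^ n) ^ (1 + 1 / ((n : ℝ) - 1)) := by
          rw [lam, ← Real.rpow_natCast, ← Real.rpow_mul h.le]
          congr 1
          field_simp
          ring
      _ = del n * (del n + 1) / (2 * kap) ^ n * lam n := by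
          rw [Real.rpow_add h, Real.rpow_one, lam]
  have hrpow : y ^ n * (y ^ (-del n)) ^ n = y ^ (-del n) / y ^ 2 := by
    rw [← Real.rpow_natCast (y ^ (-del n)) n, ← Real.rpow_mul hy.le, ← Real.rpow_natCast y n,
      ← Real.rpow_natCast y 2, ← Real.rpow_add hy, ← Real.rpow_sub hy, del]
    congr 1
    field_simp
    push_cast
    ring
  calc (2 * kap * y * (lam n * y ^ (-del n))) ^ n
      = (2 * kap) ^ n * lam n ^ n * (y ^ n * (y ^ (-del n)) ^ n) := by ring
    _ = del n * (del n + 1) / y ^ 2 * (lam n * y ^ (-del n)) := by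
      rw [hlam, hrpow]; field_simp

lemma mu1_eq (y : ℝ) : mu1 y = kap * ∫ σ in (0 : ℝ)..(y / 2), 2 * Real.exp (-σ ^ 2) := by
  rw [mu1, kap, intervalIntegral.integral_const_mul]; ring

lemma mu1_le {y : ℝ} (hy : 0 ≤ y) : mu1 y ≤ kap * y := by
  rw [mu1_eq]
  refine mul_le_mul_of_nonneg_left ?_ kap_pos.le
  calc ∫ σ in (0 : ℝ)..(y / 2), 2 * Real.exp (-σ ^ 2) ≤ ∫ _ in (0 : ℝ)..(y / 2), (2 : ℝ) := by
        refine intervalIntegral.integral_mono_on (by positivity)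
          (Continuous.intervalIntegrable (by fun_prop) _ _) (by simp) fun σ _ => ?_
        have : Real.exp (-σ ^ 2) ≤ 1 := Real.exp_le_one_iff.2 (by nlinarith)
        linarith
    _ = y := by simp

lemma le_mu1 {y : ℝ} (hy : 0 ≤ y) : kap * y * Real.exp (-y ^ 2 / 4) ≤ mu1 y := by
  rw [mu1_eq, mul_assoc]
  refine mul_le_mul_of_nonneg_left ?_ kap_pos.le
  calc y * Real.exp (-y ^ 2 / 4) = ∫ _ in (0 : ℝ)..(y / 2), 2 * Real.exp (-y ^ 2 / 4) := by
        simp; ring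
    _ ≤ ∫ σ in (0 : ℝ)..(y / 2), 2 * Real.exp (-σ ^ 2) := by
        refine intervalIntegral.integral_mono_on (by positivity) (by simp)
          (Continuous.intervalIntegrable (by fun_prop) _ _) fun σ hσ => ?_
        gcongr
        nlinarith [hσ.1, hσ.2]

lemma mu1_pos {y : ℝ} (hy : 0 < y) : 0 < mu1 y := by
  have := kap_pos
  exact lt_of_lt_of_le (by positivity) (le_mu1 hy.le)

lemma continuous_mu1 : Continuous mu1 := by
  have h : Continuous fun x : ℝ => ∫ σ in (0 : ℝ)..x, Real.exp (-σ ^ 2) :=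
    intervalIntegral.continuous_primitive
      (fun _ _ => Continuous.intervalIntegrable (by fun_prop) _ _) 0
  exact continuous_const.mul (h.comp (continuous_id.div_const 2))

lemma mul_two_mul_mu1_pow_lt {n : ℕ} (hn : 1 < n) {y x θ : ℝ} (hy : 0 < y) (hx : 0 < x)
    (hθ : 1 < θ) : θ * (2 * mu1 y * x) ^ n < (2 * mu1 y * (θ * x)) ^ n := by
  have := mu1_pos hy
  calc θ * (2 * mu1 y * x) ^ n < θ ^ n * (2 * mu1 y * x) ^ n := by
        gcongr; exact lt_self_pow₀ hθ hn
    _ = (2 * mu1 y * (θ * x)) ^ n := by ring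

/-- Two profiles need not be comparable up to a factor at infinity, where only `o(y ^ (-2ε))` is
known; adding the multiple `s p` of the slow supersolution repairs this. -/
lemma le_add_const_mul_of_isDiffusiveProfile {n : ℕ} (hn : 1 < n) {u w p : ℝ → ℝ} {s c : ℝ}
    (hu : IsDiffusiveProfile n u) (hw : IsDiffusiveProfile n w) (hs : 0 < s)
    (hp : ContDiff ℝ 2 p) (hp_pos : ∀ y, 0 < p y) (hp_super : ∀ y, similarityOp (eps n) p y ≤ 0)
    (hc : 0 < c) (hp_top : ∀ᶠ y in atTop, c ≤ y ^ (2 * eps n) * p y) {y : ℝ} (hy : 0 < y) :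
    u y ≤ w y + s * p y := by
  obtain ⟨hu_diff, -, hu_eq, hu_zero, hu_top⟩ := hu
  obtain ⟨hw_diff, hw_pos, hw_eq, hw_zero, -⟩ := hw
  refine le_of_superlinear (F := w + s • p) (f := fun y x => (2 * mu1 y * x) ^ n) hu_diff
    (hw_diff.add (hp.contDiffOn.const_smul s))
    (fun x hx => add_pos (hw_pos x hx) (mul_pos hs (hp_pos x)))
    (fun _ hy _ hx _ hθ => mul_two_mul_mu1_pow_lt hn hy hx hθ)
    (fun x hx => (hu_eq x hx).ge) ?_ ?_ ?_ hy
  · intro x hx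
    rw [ellipticOp_add_smul _ _ s (hw_diff.contDiffAt (Ioi_mem_nhds hx)) hp.contDiffAt]
    have hsp : s * similarityOp (eps n) p x ≤ 0 :=
      mul_nonpos_of_nonneg_of_nonpos hs.le (hp_super x)
    have hwp : w x ≤ (w + s • p) x := le_add_of_nonneg_right (mul_pos hs (hp_pos x)).le
    have := mu1_pos hx
    have := hw_pos x hx
    calc similarityOp (eps n) w x + s * similarityOp (eps n) p x
        ≤ similarityOp (eps n) w x := by linarith
      _ = (2 * mu1 x * w x) ^ n := hw_eq x hx
      _ ≤ (2 * mu1 x * (w + s • p) x) ^ n := by gcongr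
  · intro θ hθ
    have hlt : lam n < θ * lam n := lt_mul_of_one_lt_left (lam_pos hn) hθ
    filter_upwards [hu_zero.eventually_lt (hw_zero.const_mul θ) hlt, self_mem_nhdsWithin]
      with x hx hx0
    have hpow : 0 < x ^ del n := Real.rpow_pos_of_pos hx0 _
    have hux : u x < θ * w x := by
      rw [mul_left_comm] at hx
      exact lt_of_mul_lt_mul_left hx hpow.le
    have : 0 < s * p x := mul_pos hs (hp_pos x)
    calc u x ≤ θ * w x := hux.le
      _ ≤ θ * (w + s • p) x := by gcongr; exact (le_add_of_nonneg_right this.le)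
  · intro θ hθ
    filter_upwards [hu_top.eventually_lt_const (mul_pos hs hc), hp_top, eventually_gt_atTop 0]
      with x hux hpx hx0
    have hpow : 0 < x ^ (2 * eps n) := Real.rpow_pos_of_pos hx0 _
    have hsp : u x ≤ s * p x := by
      refine le_of_mul_le_mul_left (hux.le.trans ?_) hpow
      rw [mul_left_comm]
      gcongr
    have hF : 0 < (w + s • p) x := add_pos (hw_pos x hx0) (mul_pos hs (hp_pos x))
    calc u x ≤ (w + s • p) x := hsp.trans (le_add_of_nonneg_left (hw_pos x hx0).le)
      _ ≤ θ * (w + s • p) x := le_mul_of_one_le_left hF.le hθ.le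

theorem le_of_isDiffusiveProfile {n : ℕ} (hn : 4 ≤ n) {u w : ℝ → ℝ}
    (hu : IsDiffusiveProfile n u) (hw : IsDiffusiveProfile n w) {y : ℝ} (hy : 0 < y) :
    u y ≤ w y := by
  have hn1 : 1 < n := by omega
  have hε := eps_le_one_third hn
  obtain ⟨p, hp, hp_pos, hp_super, c, hc, hp_top⟩ :=
    exists_slow_supersolution (eps_pos hn1).le (show eps n < 1 / 2 by linarith)
  refine le_of_forall_pos_le_add fun η hη => ?_
  have := le_add_const_mul_of_isDiffusiveProfile hn1 hu hw (div_pos hη (hp_pos y)) hp hp_pos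
    hp_super hc hp_top hy
  rwa [div_mul_cancel₀ _ (hp_pos y).ne'] at this

lemma exists_isFixedPt_mem_Icc {α : Type*} [CompleteLattice α] {f : α → α} {a b : α} (hab : a ≤ b)
    (hf : MonotoneOn f (Icc a b)) (ha : a ≤ f a) (hb : f b ≤ b) :
    ∃ x ∈ Icc a b, f x = x := by
  let S := {z ∈ Icc a b | f z ≤ z}
  have hbS : b ∈ S := ⟨right_mem_Icc.2 hab, hb⟩
  have hx : sInf S ∈ Icc a b := ⟨le_sInf fun z hz => hz.1.1, sInf_le hbS⟩
  have hfx : f (sInf S) ≤ sInf S := le_sInf fun z hz => (hf hx hz.1 (sInf_le hz)).trans hz.2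
  have hfx_mem : f (sInf S) ∈ Icc a b :=
    ⟨ha.trans (hf (left_mem_Icc.2 hab) hx hx.1), hfx.trans hx.2⟩
  exact ⟨sInf S, hx, hfx.antisymm (sInf_le ⟨hfx_mem, hf hfx_mem hx hfx⟩)⟩

lemma hasDerivAt_integral_Ioi {f : ℝ → ℝ} {c s : ℝ} (hcs : c < s) (hf : IntegrableOn f (Ioi c))
    (hcont : ContinuousOn f (Ioi c)) : HasDerivAt (fun x => ∫ t in Ioi x, f t) (-f s) s := by
  have hprim : HasDerivAt (fun x => ∫ t in c..x, f t) (f s) s := by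
    refine intervalIntegral.integral_hasDerivAt_right ?_
      (hcont.stronglyMeasurableAtFilter isOpen_Ioi s hcs) (hcont.continuousAt (Ioi_mem_nhds hcs))
    rw [intervalIntegrable_iff_integrableOn_Ioc_of_le hcs.le]
    exact hf.mono_set Ioc_subset_Ioi_self
  refine (hprim.const_sub (∫ t in Ioi c, f t)).congr_of_eventuallyEq ?_
  filter_upwards [Ioi_mem_nhds hcs] with x hx
  rw [← intervalIntegral.integral_Ioi_sub_Ioi hf (le_of_lt hx)]
  ring

section Primitive

variable {F : ℝ → ENNReal} {v : ℝ → ℝ}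

lemma intervalIntegrable_toReal_of_lintegral_eq (hF : AEMeasurable F (volume.restrict (Ioi 0)))
    (hv : ∀ y ≥ 0, ∫⁻ s in Ioc 0 y, F s = ENNReal.ofReal (v y)) {y : ℝ} (hy : 0 ≤ y) :
    IntervalIntegrable (fun s => (F s).toReal) volume 0 y := by
  rw [intervalIntegrable_iff_integrableOn_Ioc_of_le hy]
  exact integrable_toReal_of_lintegral_ne_top (hF.mono_set Ioc_subset_Ioi_self)
    (by rw [hv y hy]; exact ENNReal.ofReal_ne_top)

lemma intervalIntegral_toReal_of_lintegral_eq (hF : AEMeasurable F (volume.restrict (Ioi 0)))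
    (hv_nonneg : ∀ y ≥ 0, 0 ≤ v y) (hv : ∀ y ≥ 0, ∫⁻ s in Ioc 0 y, F s = ENNReal.ofReal (v y))
    {y : ℝ} (hy : 0 ≤ y) : ∫ s in (0 : ℝ)..y, (F s).toReal = v y := by
  have hF' := hF.mono_set (s := Ioc 0 y) Ioc_subset_Ioi_self
  have hfin : ∫⁻ s in Ioc 0 y, F s ≠ ⊤ := by rw [hv y hy]; exact ENNReal.ofReal_ne_top
  rw [intervalIntegral.integral_of_le hy, integral_toReal hF' (ae_lt_top' hF' hfin), hv y hy,
    ENNReal.toReal_ofReal (hv_nonneg y hy)]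

lemma continuousOn_of_lintegral_eq (hF : AEMeasurable F (volume.restrict (Ioi 0)))
    (hv_nonneg : ∀ y ≥ 0, 0 ≤ v y) (hv : ∀ y ≥ 0, ∫⁻ s in Ioc 0 y, F s = ENNReal.ofReal (v y)) :
    ContinuousOn v (Ici 0) := by
  intro y hy
  have hy : 0 ≤ y := hy
  have hle : 0 ≤ y + 1 := by positivity
  have hprim := intervalIntegral.continuousOn_primitive_interval'
    (intervalIntegrable_toReal_of_lintegral_eq hF hv hle) left_mem_uIcc
  rw [uIcc_of_le hle] at hprim
  have hIcc : ContinuousOn v (Icc 0 (y + 1)) := hprim.congr fun x hx =>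
    (intervalIntegral_toReal_of_lintegral_eq hF hv_nonneg hv hx.1).symm
  exact (hIcc y ⟨hy, by linarith⟩).mono_of_mem_nhdsWithin
    (inter_mem_nhdsWithin (Ici 0) (Iic_mem_nhds (lt_add_one y)))

lemma hasDerivAt_of_lintegral_eq {f : ℝ → ℝ} (hf : ContinuousOn f (Ioi 0))
    (hf_nonneg : ∀ y > 0, 0 ≤ f y) (hv_nonneg : ∀ y ≥ 0, 0 ≤ v y)
    (hv : ∀ y ≥ 0, ∫⁻ s in Ioc 0 y, ENNReal.ofReal (f s) = ENNReal.ofReal (v y))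
    {y : ℝ} (hy : 0 < y) : HasDerivAt v (f y) y := by
  have hmeas : AEMeasurable (fun s => ENNReal.ofReal (f s)) (volume.restrict (Ioi 0)) :=
    (hf.aemeasurable measurableSet_Ioi).ennreal_ofReal
  have htoReal : EqOn (fun s => (ENNReal.ofReal (f s)).toReal) f (Ioi 0) := fun s hs =>
    ENNReal.toReal_ofReal (hf_nonneg s hs)
  have hcont := hf.congr htoReal
  have hprim := intervalIntegral.integral_hasDerivAt_right
    (intervalIntegrable_toReal_of_lintegral_eq hmeas hv hy.le)
    (hcont.stronglyMeasurableAtFilter isOpen_Ioi y hy) (hcont.continuousAt (Ioi_mem_nhds hy))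
  refine (hprim.congr_of_eventuallyEq ?_).congr_deriv (htoReal hy)
  filter_upwards [Ioi_mem_nhds hy] with x hx
  exact (intervalIntegral_toReal_of_lintegral_eq hmeas hv_nonneg hv (le_of_lt hx)).symm

end Primitive

/-- `V` and `H` satisfy `V' = A H` and `H' = -q` on `(0, ∞)` with `V 0 = 0` and `H → 0` at infinity,
i.e. `V` solves the boundary value problem `-(V' / A)' = q` and `H` is its flux `V' / A`. -/
structure IsFluxPair (A q V H : ℝ → ℝ) : Prop where
  hasDerivAt : ∀ y > 0, HasDerivAt V (A y * H y) y
  hasDerivAt_flux : ∀ y > 0, HasDerivAt H (-q y) y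
  continuousOn : ContinuousOn V (Ici 0)
  map_zero : V 0 = 0
  tendsto_flux : Tendsto H atTop (𝓝 0)

/-- The Green operator of the boundary value problem in `IsFluxPair`. Lower Lebesgue integrals make
it monotone in `q` without any measurability assumption, as Knaster–Tarski requires. -/
noncomputable def greenIntegral (A q : ℝ → ℝ) (y : ℝ) : ENNReal :=
  ∫⁻ s in Ioc 0 y, ENNReal.ofReal (A s) * ∫⁻ t in Ioi s, ENNReal.ofReal (q t)

lemma greenIntegral_mono (A : ℝ → ℝ) {q q' : ℝ → ℝ} (h : ∀ t > 0, q t ≤ q' t) (y : ℝ) :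
    greenIntegral A q y ≤ greenIntegral A q' y :=
  setLIntegral_mono' measurableSet_Ioc fun _ hs => mul_le_mul_right
    (setLIntegral_mono' measurableSet_Ioi fun t ht =>
      ENNReal.ofReal_le_ofReal (h t (hs.1.trans ht))) _

lemma greenIntegral_of_nonpos (A q : ℝ → ℝ) {y : ℝ} (hy : y ≤ 0) : greenIntegral A q y = 0 := by
  simp [greenIntegral, Ioc_eq_empty hy.not_gt]

namespace IsFluxPair

variable {A q q' V V' H H' : ℝ → ℝ}

lemma add (h : IsFluxPair A q V H) (h' : IsFluxPair A q' V' H') :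
    IsFluxPair A (q + q') (V + V') (H + H') where
  hasDerivAt y hy := ((h.hasDerivAt y hy).add (h'.hasDerivAt y hy)).congr_deriv (by simp; ring)
  hasDerivAt_flux y hy :=
    ((h.hasDerivAt_flux y hy).add (h'.hasDerivAt_flux y hy)).congr_deriv (by simp; ring)
  continuousOn := h.continuousOn.add h'.continuousOn
  map_zero := by simp [h.map_zero, h'.map_zero]
  tendsto_flux := add_zero (0 : ℝ) ▸ h.tendsto_flux.add h'.tendsto_flux

lemma const_smul (c : ℝ) (h : IsFluxPair A q V H) : IsFluxPair A (c • q) (c • V) (c • H) where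
  hasDerivAt y hy := ((h.hasDerivAt y hy).const_smul c).congr_deriv (by simp; ring)
  hasDerivAt_flux y hy := ((h.hasDerivAt_flux y hy).const_smul c).congr_deriv (by simp)
  continuousOn := h.continuousOn.const_smul c
  map_zero := by simp [h.map_zero]
  tendsto_flux := mul_zero c ▸ h.tendsto_flux.const_smul c

lemma integrableOn_source (h : IsFluxPair A q V H) (hq : ∀ y > 0, 0 ≤ q y) {s : ℝ} (hs : 0 < s) :
    IntegrableOn q (Ioi s) := by
  simpa using (integrableOn_Ioi_deriv_of_nonpos'
    (fun x hx => h.hasDerivAt_flux x (hs.trans_le hx))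
    (fun x hx => neg_nonpos.2 (hq x (hs.trans hx))) h.tendsto_flux).neg

lemma integral_source (h : IsFluxPair A q V H) (hq : ∀ y > 0, 0 ≤ q y) {s : ℝ} (hs : 0 < s) :
    ∫ t in Ioi s, q t = H s := by
  have := integral_Ioi_of_hasDerivAt_of_nonpos'
    (fun x hx => h.hasDerivAt_flux x (hs.trans_le hx))
    (fun x hx => neg_nonpos.2 (hq x (hs.trans hx))) h.tendsto_flux
  rw [integral_neg] at this
  linarith

lemma flux_nonneg (h : IsFluxPair A q V H) (hq : ∀ y > 0, 0 ≤ q y) {s : ℝ} (hs : 0 < s) :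
    0 ≤ H s := by
  rw [← h.integral_source hq hs]
  exact setIntegral_nonneg measurableSet_Ioi fun t ht => hq t (hs.trans ht)

lemma nonneg (h : IsFluxPair A q V H) (hA : ∀ y > 0, 0 ≤ A y) (hq : ∀ y > 0, 0 ≤ q y) {y : ℝ}
    (hy : 0 ≤ y) : 0 ≤ V y := by
  have hmono : MonotoneOn V (Ici 0) := by
    refine monotoneOn_of_deriv_nonneg (convex_Ici 0) h.continuousOn ?_ ?_ <;>
      rw [interior_Ici] <;> intro x hx
    · exact (h.hasDerivAt x hx).differentiableAt.differentiableWithinAt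
    · rw [(h.hasDerivAt x hx).deriv]
      exact mul_nonneg (hA x hx) (h.flux_nonneg hq hx)
  exact h.map_zero ▸ hmono self_mem_Ici hy hy

lemma greenIntegral_eq (h : IsFluxPair A q V H) (hA : ∀ y > 0, 0 ≤ A y) (hq : ∀ y > 0, 0 ≤ q y)
    {y : ℝ} (hy : 0 ≤ y) : greenIntegral A q y = ENNReal.ofReal (V y) := by
  have hflux : ∀ s > 0, ∫⁻ t in Ioi s, ENNReal.ofReal (q t) = ENNReal.ofReal (H s) := by
    intro s hs
    rw [← h.integral_source hq hs,
      ofReal_integral_eq_lintegral_ofReal (h.integrableOn_source hq hs)]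
    exact ae_restrict_of_forall_mem measurableSet_Ioi fun t ht => hq t (hs.trans ht)
  have hnonneg : ∀ s > 0, 0 ≤ A s * H s := fun s hs =>
    mul_nonneg (hA s hs) (h.flux_nonneg hq hs)
  have hcont : ContinuousOn V (Icc 0 y) := h.continuousOn.mono Icc_subset_Ici_self
  have hint : IntegrableOn (fun s => A s * H s) (Ioc 0 y) :=
    intervalIntegral.integrableOn_deriv_of_nonneg hcont (fun s hs => h.hasDerivAt s hs.1)
      fun s hs => hnonneg s hs.1
  calc greenIntegral A q y = ∫⁻ s in Ioc 0 y, ENNReal.ofReal (A s * H s) :=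
        setLIntegral_congr_fun measurableSet_Ioc fun s hs => by
          simp only [hflux s hs.1, ENNReal.ofReal_mul (hA s hs.1)]
    _ = ENNReal.ofReal (∫ s in Ioc 0 y, A s * H s) :=
        (ofReal_integral_eq_lintegral_ofReal hint
          (ae_restrict_of_forall_mem measurableSet_Ioc fun s hs => hnonneg s hs.1)).symm
    _ = ENNReal.ofReal (V y) := by
        rw [← intervalIntegral.integral_of_le hy,
          intervalIntegral.integral_eq_sub_of_hasDerivAt_of_le hy hcont
            (fun s hs => h.hasDerivAt s hs.1)
            ((intervalIntegrable_iff_integrableOn_Ioc_of_le hy).2 hint), h.map_zero, sub_zero]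

end IsFluxPair

lemma continuousOn_of_greenIntegral_eq {A q v : ℝ → ℝ} (hA : ContinuousOn A (Ioi 0))
    (hv_nonneg : ∀ y ≥ 0, 0 ≤ v y) (hv : ∀ y ≥ 0, greenIntegral A q y = ENNReal.ofReal (v y)) :
    ContinuousOn v (Ici 0) := by
  have htail : Antitone fun s => ∫⁻ t in Ioi s, ENNReal.ofReal (q t) := fun s s' hs =>
    lintegral_mono_set (Ioi_subset_Ioi hs)
  exact continuousOn_of_lintegral_eq
    ((hA.aemeasurable measurableSet_Ioi).ennreal_ofReal.mul htail.measurable.aemeasurable)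
    hv_nonneg hv

lemma isFluxPair_of_greenIntegral_eq {A q v : ℝ → ℝ} (hA : ContinuousOn A (Ioi 0))
    (hA_nonneg : ∀ y > 0, 0 ≤ A y) (hq : ContinuousOn q (Ioi 0)) (hq_nonneg : ∀ y > 0, 0 ≤ q y)
    (hq_int : ∀ s > 0, IntegrableOn q (Ioi s)) (hv_nonneg : ∀ y ≥ 0, 0 ≤ v y)
    (hv : ∀ y ≥ 0, greenIntegral A q y = ENNReal.ofReal (v y)) :
    IsFluxPair A q v (fun s => ∫ t in Ioi s, q t) := by
  have hflux : ∀ s > 0, HasDerivAt (fun x => ∫ t in Ioi x, q t) (-q s) s := fun s hs =>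
    hasDerivAt_integral_Ioi (half_lt_self hs) (hq_int _ (half_pos hs))
      (hq.mono (Ioi_subset_Ioi (half_pos hs).le))
  have hflux_nonneg : ∀ s > 0, 0 ≤ ∫ t in Ioi s, q t := fun s hs =>
    setIntegral_nonneg measurableSet_Ioi fun t ht => hq_nonneg t (hs.trans ht)
  refine ⟨fun y hy => ?_, hflux, continuousOn_of_greenIntegral_eq hA hv_nonneg hv, ?_,
    tendsto_integral_Ioi_zero tendsto_id⟩
  · refine hasDerivAt_of_lintegral_eq (f := fun s => A s * ∫ t in Ioi s, q t)
      (hA.mul fun s hs => (hflux s hs).continuousAt.continuousWithinAt)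
      (fun s hs => mul_nonneg (hA_nonneg s hs) (hflux_nonneg s hs)) hv_nonneg (fun x hx => ?_) hy
    rw [← hv x hx]
    refine setLIntegral_congr_fun measurableSet_Ioc fun s hs => ?_
    rw [ENNReal.ofReal_mul (hA_nonneg s hs.1), ofReal_integral_eq_lintegral_ofReal (hq_int s hs.1)]
    exact ae_restrict_of_forall_mem measurableSet_Ioi fun t ht => hq_nonneg t (hs.1.trans ht)
  · have h := hv 0 le_rfl
    rw [greenIntegral_of_nonpos A q le_rfl, eq_comm, ENNReal.ofReal_eq_zero] at h
    exact h.antisymm (hv_nonneg 0 le_rfl)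

lemma exists_greenIntegral_fixedPt {A V₀ V₁ : ℝ → ℝ} {g : ℝ → ℝ → ℝ}
    (hg : ∀ t > 0, MonotoneOn (g t) (Icc 0 (V₁ t))) (hV₀ : ∀ y > 0, 0 ≤ V₀ y)
    (hle : ∀ y > 0, V₀ y ≤ V₁ y)
    (hsub : ∀ y > 0, ENNReal.ofReal (V₀ y) ≤ greenIntegral A (fun t => g t (V₀ t)) y)
    (hsuper : ∀ y > 0, greenIntegral A (fun t => g t (V₁ t)) y ≤ ENNReal.ofReal (V₁ y)) :
    ∃ v : ℝ → ℝ, (∀ y, 0 ≤ v y) ∧ (∀ y > 0, v y ∈ Icc (V₀ y) (V₁ y)) ∧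
      ∀ y, greenIntegral A (fun t => g t (v t)) y = ENNReal.ofReal (v y) := by
  let lower : ℝ → ENNReal := (Ioi 0).indicator fun y => ENNReal.ofReal (V₀ y)
  let upper : ℝ → ENNReal := fun y => ENNReal.ofReal (V₁ y)
  let T : (ℝ → ENNReal) → ℝ → ENNReal := fun w => greenIntegral A fun t => g t (w t).toReal
  have hV₁ : ∀ y > 0, 0 ≤ V₁ y := fun y hy => (hV₀ y hy).trans (hle y hy)
  have hlower : ∀ y > 0, lower y = ENNReal.ofReal (V₀ y) := fun y hy => indicator_of_mem hy _
  have hle_upper : lower ≤ upper := indicator_le' (fun y hy => ENNReal.ofReal_le_ofReal (hle y hy))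
    fun _ _ => zero_le
  have hmem : ∀ w ≤ upper, ∀ t > 0, (w t).toReal ∈ Icc 0 (V₁ t) := fun w hw t ht =>
    ⟨ENNReal.toReal_nonneg, ENNReal.toReal_le_of_le_ofReal (hV₁ t ht) (hw t)⟩
  have hmono : MonotoneOn T (Icc lower upper) := fun w hw w' hw' hww' =>
    greenIntegral_mono A fun t ht => hg t ht (hmem w hw.2 t ht) (hmem w' hw'.2 t ht)
      (ENNReal.toReal_mono (ne_top_of_le_ne_top ENNReal.ofReal_ne_top (hw'.2 t)) (hww' t))
  have hT_lower : lower ≤ T lower := indicator_le' (fun y hy => (hsub y hy).trans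
    (greenIntegral_mono A (fun t ht => by rw [hlower t ht, ENNReal.toReal_ofReal (hV₀ t ht)]) y))
    fun _ _ => zero_le
  have hT_upper : T upper ≤ upper := by
    intro y
    rcases le_or_gt y 0 with hy | hy
    · exact (greenIntegral_of_nonpos _ _ hy).trans_le zero_le
    · exact (greenIntegral_mono A (fun t ht => by rw [ENNReal.toReal_ofReal (hV₁ t ht)]) y).trans
        (hsuper y hy)
  obtain ⟨w, hw, hfix⟩ := exists_isFixedPt_mem_Icc hle_upper hmono hT_lower hT_upper
  have hw_top : ∀ y, w y ≠ ⊤ := fun y => ne_top_of_le_ne_top ENNReal.ofReal_ne_top (hw.2 y)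
  refine ⟨fun y => (w y).toReal, fun y => ENNReal.toReal_nonneg, fun y hy => ⟨?_, ?_⟩, fun y => ?_⟩
  · exact (ENNReal.ofReal_le_iff_le_toReal (hw_top y)).1 (hlower y hy ▸ hw.1 y)
  · exact (hmem w hw.2 y hy).2
  · rw [ENNReal.ofReal_toReal (hw_top y)]
    exact congrFun hfix y

theorem exists_isFluxPair_between {A q₀ q₁ V₀ V₁ H₀ H₁ : ℝ → ℝ} {g : ℝ → ℝ → ℝ}
    (hA : ContinuousOn A (Ioi 0)) (hA_nonneg : ∀ y > 0, 0 ≤ A y)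
    (hg : ContinuousOn (Function.uncurry g) (Ioi 0 ×ˢ univ))
    (hg_mono : ∀ t > 0, MonotoneOn (g t) (Icc 0 (V₁ t))) (hg_zero : ∀ t > 0, 0 ≤ g t 0)
    (h₀ : IsFluxPair A q₀ V₀ H₀) (h₁ : IsFluxPair A q₁ V₁ H₁) (hq₀ : ∀ t > 0, 0 ≤ q₀ t)
    (hsub : ∀ t > 0, q₀ t ≤ g t (V₀ t)) (hsuper : ∀ t > 0, g t (V₁ t) ≤ q₁ t)
    (hle : ∀ y > 0, V₀ y ≤ V₁ y) :
    ∃ v H : ℝ → ℝ, IsFluxPair A (fun t => g t (v t)) v H ∧ ∀ y > 0, v y ∈ Icc (V₀ y) (V₁ y) := by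
  have hV₀ : ∀ y > 0, 0 ≤ V₀ y := fun y hy => h₀.nonneg hA_nonneg hq₀ hy.le
  have hV₁ : ∀ y > 0, 0 ≤ V₁ y := fun y hy => (hV₀ y hy).trans (hle y hy)
  have hq₁ : ∀ t > 0, 0 ≤ q₁ t := fun t ht => (hg_zero t ht).trans
    ((hg_mono t ht (left_mem_Icc.2 (hV₁ t ht)) (right_mem_Icc.2 (hV₁ t ht)) (hV₁ t ht)).trans
      (hsuper t ht))
  obtain ⟨v, hv_nonneg, hv_mem, hv⟩ := exists_greenIntegral_fixedPt hg_mono hV₀ hle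
    (fun y hy => h₀.greenIntegral_eq hA_nonneg hq₀ hy.le ▸ greenIntegral_mono A hsub y)
    (fun y hy => h₁.greenIntegral_eq hA_nonneg hq₁ hy.le ▸ greenIntegral_mono A hsuper y)
  have hv_Icc : ∀ t > 0, v t ∈ Icc 0 (V₁ t) := fun t ht => ⟨hv_nonneg t, (hv_mem t ht).2⟩
  have hv_cont := continuousOn_of_greenIntegral_eq hA (fun y _ => hv_nonneg y) fun y _ => hv y
  have hq_cont : ContinuousOn (fun t => g t (v t)) (Ioi 0) :=
    hg.comp (f := fun t => (t, v t)) (continuousOn_id.prodMk (hv_cont.mono Ioi_subset_Ici_self))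
      fun t ht => ⟨ht, mem_univ _⟩
  have hq_nonneg : ∀ t > 0, 0 ≤ g t (v t) := fun t ht => (hg_zero t ht).trans
    (hg_mono t ht (left_mem_Icc.2 (hV₁ t ht)) (hv_Icc t ht) (hv_nonneg t))
  have hq_le : ∀ t > 0, g t (v t) ≤ q₁ t := fun t ht =>
    (hg_mono t ht (hv_Icc t ht) (right_mem_Icc.2 (hV₁ t ht)) (hv_mem t ht).2).trans (hsuper t ht)
  refine ⟨v, _, isFluxPair_of_greenIntegral_eq hA hA_nonneg hq_cont hq_nonneg (fun s hs => ?_)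
    (fun y _ => hv_nonneg y) fun y _ => hv y, hv_mem⟩
  refine (h₁.integrableOn_source hq₁ hs).mono'
    ((hq_cont.mono (Ioi_subset_Ioi hs.le)).aestronglyMeasurable measurableSet_Ioi)
    (ae_restrict_of_forall_mem measurableSet_Ioi fun t ht => ?_)
  rw [Real.norm_of_nonneg (hq_nonneg t (hs.trans ht))]
  exact hq_le t (hs.trans ht)

/-- The functions `y ^ (-k) * exp (-y ^ 2 / 4)`, from which the barriers for the profile equation
are built: they decay fast enough at infinity and cover every algebraic singularity at `0`. -/
noncomputable def gaussPow (k y : ℝ) : ℝ :=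
  y ^ (-k) * Real.exp (-y ^ 2 / 4)

/-- The factor in `similarityOp ε (gaussPow k) = gaussPotential ε k * gaussPow k`. -/
noncomputable def gaussPotential (ε k y : ℝ) : ℝ :=
  k * (k + 1) / y ^ 2 + (k - 1) / 2 + ε

/-- The weight `A` for which `-(V' / A)' = q` is, up to sign and a zeroth-order term, the equation
satisfied by `gaussPow m * V`. -/
noncomputable def gaussWeight (m y : ℝ) : ℝ :=
  y ^ m / gaussPow m y

lemma gaussPow_pos (k : ℝ) {y : ℝ} (hy : 0 < y) : 0 < gaussPow k y := by
  unfold gaussPow; positivity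

lemma gaussPow_mul_rpow (k a : ℝ) {y : ℝ} (hy : 0 < y) :
    gaussPow k y * y ^ a = gaussPow (k - a) y := by
  rw [gaussPow, gaussPow, neg_sub, sub_eq_add_neg, add_comm a, Real.rpow_add hy]
  ring

lemma gaussPow_zero (y : ℝ) : gaussPow 0 y = Real.exp (-y ^ 2 / 4) := by
  simp [gaussPow]

lemma continuous_gaussPow {k : ℝ} (hk : k ≤ 0) : Continuous (gaussPow k) :=
  (Real.continuous_rpow_const (neg_nonneg.2 hk)).mul (by fun_prop)

lemma hasDerivAt_gaussPow (k : ℝ) {y : ℝ} (hy : 0 < y) :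
    HasDerivAt (gaussPow k) (-(k / y + y / 2) * gaussPow k y) y := by
  have hexp : HasDerivAt (fun x : ℝ => Real.exp (-x ^ 2 / 4))
      (Real.exp (-y ^ 2 / 4) * (-(2 * y) / 4)) y := by
    simpa using (((hasDerivAt_pow 2 y).neg).div_const 4).exp
  refine ((Real.hasDerivAt_rpow_const (Or.inl hy.ne')).mul hexp).congr_deriv ?_
  rw [gaussPow, Real.rpow_sub_one hy.ne']
  ring

lemma continuousOn_gaussPow (k : ℝ) : ContinuousOn (gaussPow k) (Ioi 0) := fun _ hy =>
  (hasDerivAt_gaussPow k hy).continuousAt.continuousWithinAt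

lemma tendsto_gaussPow_atTop (k : ℝ) : Tendsto (gaussPow k) atTop (𝓝 0) := by
  refine ((tendsto_rpow_abs_mul_exp_neg_mul_sq_cocompact (a := 1 / 4) (by norm_num) (-k)).mono_left
    atTop_le_cocompact).congr' ?_
  filter_upwards [eventually_gt_atTop 0] with y hy
  rw [abs_of_pos hy, gaussPow]
  congr 2
  ring

lemma gaussPotential_mono (ε : ℝ) {k m : ℝ} (hk : 0 ≤ k) (hkm : k ≤ m) (y : ℝ) :
    gaussPotential ε k y ≤ gaussPotential ε m y := by
  unfold gaussPotential
  have := hk.trans hkm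
  gcongr

lemma gaussWeight_pos (m : ℝ) {y : ℝ} (hy : 0 < y) : 0 < gaussWeight m y :=
  div_pos (Real.rpow_pos_of_pos hy m) (gaussPow_pos m hy)

lemma gaussPow_mul_gaussWeight (m : ℝ) {y : ℝ} (hy : 0 < y) :
    gaussPow m y * gaussWeight m y = y ^ m :=
  mul_div_cancel₀ _ (gaussPow_pos m hy).ne'

lemma continuousOn_rpow_const_Ioi (m : ℝ) : ContinuousOn (fun y : ℝ => y ^ m) (Ioi 0) :=
  continuousOn_id.rpow_const fun _ hy => Or.inl (ne_of_gt hy)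

lemma continuousOn_gaussWeight (m : ℝ) : ContinuousOn (gaussWeight m) (Ioi 0) :=
  (continuousOn_rpow_const_Ioi m).div (continuousOn_gaussPow m) fun _ hy => (gaussPow_pos m hy).ne'

lemma isFluxPair_gaussPow (ε : ℝ) {k m : ℝ} (hkm : k < m) :
    IsFluxPair (gaussWeight m)
      (fun y => (gaussPotential ε m y - gaussPotential ε k y) * gaussPow k y / y ^ m)
      (fun y => y ^ (m - k)) ((m - k) • gaussPow (m + k + 1)) where
  hasDerivAt y hy := by
    refine (Real.hasDerivAt_rpow_const (Or.inl hy.ne')).congr_deriv ?_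
    have h : y ^ (m - k - 1) * gaussPow m y = y ^ m * gaussPow (m + k + 1) y := by
      rw [mul_comm, gaussPow_mul_rpow m _ hy, mul_comm, gaussPow_mul_rpow _ m hy]
      congr 1; ring
    rw [gaussWeight, Pi.smul_apply, smul_eq_mul, div_mul_eq_mul_div,
      eq_div_iff (gaussPow_pos m hy).ne']
    linear_combination (m - k) * h
  hasDerivAt_flux y hy := by
    refine ((hasDerivAt_gaussPow (m + k + 1) hy).const_smul (m - k)).congr_deriv ?_
    have h : gaussPow (m + k + 1) y = gaussPow k y / y ^ m / y := by
      rw [div_div, eq_div_iff (by positivity), ← Real.rpow_add_one hy.ne',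
        gaussPow_mul_rpow _ _ hy]
      congr 1; ring
    rw [h, smul_eq_mul, gaussPotential, gaussPotential]
    field_simp
    ring
  continuousOn := (Real.continuous_rpow_const (sub_nonneg.2 hkm.le)).continuousOn
  map_zero := Real.zero_rpow (sub_ne_zero.2 hkm.ne')
  tendsto_flux := mul_zero (m - k) ▸ (tendsto_gaussPow_atTop _).const_smul (m - k)

lemma contDiffOn_two_of_hasDerivAt {s : Set ℝ} (hs : IsOpen s) {u u' u'' : ℝ → ℝ}
    (hu : ∀ y ∈ s, HasDerivAt u (u' y) y) (hu' : ∀ y ∈ s, HasDerivAt u' (u'' y) y)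
    (hu'' : ContinuousOn u'' s) : ContDiffOn ℝ 2 u s := by
  have h : ContDiffOn ℝ (0 + 1) u' s := (contDiffOn_succ_iff_deriv_of_isOpen hs).2
    ⟨fun y hy => (hu' y hy).differentiableAt.differentiableWithinAt, by simp,
      contDiffOn_zero.2 (hu''.congr fun y hy => (hu' y hy).deriv)⟩
  rw [zero_add] at h
  exact one_add_one_eq_two (R := WithTop ℕ∞) ▸ (contDiffOn_succ_iff_deriv_of_isOpen hs).2
    ⟨fun y hy => (hu y hy).differentiableAt.differentiableWithinAt, by simp,
      h.congr fun y hy => (hu y hy).deriv⟩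

namespace IsFluxPair

variable {m : ℝ} {q V H : ℝ → ℝ}

lemma hasDerivAt_gaussPow_mul (h : IsFluxPair (gaussWeight m) q V H) {y : ℝ} (hy : 0 < y) :
    HasDerivAt (gaussPow m * V) (-(m / y + y / 2) * (gaussPow m * V) y + y ^ m * H y) y := by
  refine ((hasDerivAt_gaussPow m hy).mul (h.hasDerivAt y hy)).congr_deriv ?_
  rw [Pi.mul_apply, ← gaussPow_mul_gaussWeight m hy]
  ring

lemma hasDerivAt_deriv_gaussPow_mul (h : IsFluxPair (gaussWeight m) q V H) {y : ℝ} (hy : 0 < y) :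
    HasDerivAt (fun x => -(m / x + x / 2) * (gaussPow m * V) x + x ^ m * H x)
      ((m * (m + 1) / y ^ 2 + m - 1 / 2 + y ^ 2 / 4) * (gaussPow m * V) y
        - y / 2 * (y ^ m * H y) - y ^ m * q y) y := by
  have hcoef : HasDerivAt (fun x : ℝ => -(m / x + x / 2)) (m / y ^ 2 - 1 / 2) y := by
    refine (((hasDerivAt_inv hy.ne').const_mul m).add ((hasDerivAt_id y).div_const 2)).neg
      |>.congr_deriv ?_
    field_simp
    ring
  refine ((hcoef.mul (h.hasDerivAt_gaussPow_mul hy)).add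
    ((Real.hasDerivAt_rpow_const (Or.inl hy.ne')).mul (h.hasDerivAt_flux y hy))).congr_deriv ?_
  rw [Real.rpow_sub_one hy.ne']
  field_simp
  ring

lemma similarityOp_gaussPow_mul (ε : ℝ) (h : IsFluxPair (gaussWeight m) q V H) {y : ℝ}
    (hy : 0 < y) :
    similarityOp ε (gaussPow m * V) y =
      gaussPotential ε m y * (gaussPow m y * V y) - y ^ m * q y := by
  rw [similarityOp, ellipticOp_of_hasDerivAt
    ((eventually_gt_nhds hy).mono fun x hx => h.hasDerivAt_gaussPow_mul hx)
    (h.hasDerivAt_deriv_gaussPow_mul hy), gaussPotential, Pi.mul_apply]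
  field_simp
  ring

lemma contDiffOn_gaussPow_mul (h : IsFluxPair (gaussWeight m) q V H)
    (hq : ContinuousOn q (Ioi 0)) : ContDiffOn ℝ 2 (gaussPow m * V) (Ioi 0) := by
  refine contDiffOn_two_of_hasDerivAt isOpen_Ioi (fun y hy => h.hasDerivAt_gaussPow_mul hy)
    (fun y hy => h.hasDerivAt_deriv_gaussPow_mul hy) ?_
  have hne : ∀ y ∈ Ioi (0 : ℝ), y ^ 2 ≠ 0 := fun y hy => pow_ne_zero 2 (ne_of_gt hy)
  have hH : ContinuousOn H (Ioi 0) := fun y hy =>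
    (h.hasDerivAt_flux y hy).continuousAt.continuousWithinAt
  have hV : ContinuousOn (gaussPow m * V) (Ioi 0) := fun y hy =>
    (h.hasDerivAt_gaussPow_mul hy).continuousAt.continuousWithinAt
  have hrpow := continuousOn_rpow_const_Ioi m
  fun_prop (disch := assumption)

end IsFluxPair

/-- The source `g` for which `similarityOp ε u = f(·, u)` becomes `-(V' / A)' = g(·, V)` under the
substitution `u = gaussPow m * V`, with `A = gaussWeight m`. -/
noncomputable def gaussSource (ε m : ℝ) (f : ℝ → ℝ → ℝ) (y x : ℝ) : ℝ :=
  (gaussPotential ε m y * (gaussPow m y * x) - f y (gaussPow m y * x)) / y ^ m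

section GaussSource

variable {ε m : ℝ} {f : ℝ → ℝ → ℝ}

lemma continuousOn_gaussSource (hf : ContinuousOn (Function.uncurry f) (Ioi 0 ×ˢ univ)) :
    ContinuousOn (Function.uncurry (gaussSource ε m f)) (Ioi 0 ×ˢ univ) := by
  have hfst : MapsTo Prod.fst (Ioi (0 : ℝ) ×ˢ (univ : Set ℝ)) (Ioi 0) := fun p hp => hp.1
  have hpow : ContinuousOn (fun p : ℝ × ℝ => p.1 ^ m) (Ioi 0 ×ˢ univ) :=
    (continuousOn_rpow_const_Ioi m).comp continuousOn_fst hfst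
  have hpot : ContinuousOn (fun p : ℝ × ℝ => gaussPotential ε m p.1) (Ioi 0 ×ˢ univ) :=
    ((continuousOn_const.div (continuousOn_fst.pow 2) fun p hp =>
      pow_ne_zero 2 (ne_of_gt hp.1)).add continuousOn_const).add continuousOn_const
  have hgauss : ContinuousOn (fun p : ℝ × ℝ => gaussPow m p.1 * p.2) (Ioi 0 ×ˢ univ) :=
    ((continuousOn_gaussPow m).comp continuousOn_fst hfst).mul continuousOn_snd
  refine ((hpot.mul hgauss).sub (hf.comp (continuousOn_fst.prodMk hgauss) fun p hp => ?_)).div hpow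
    fun p hp => (Real.rpow_pos_of_pos hp.1 m).ne'
  exact ⟨hp.1, mem_univ _⟩

lemma monotoneOn_gaussSource {y b : ℝ} (hy : 0 < y)
    (hf : MonotoneOn (fun x => gaussPotential ε m y * x - f y x) (Icc 0 (gaussPow m y * b))) :
    MonotoneOn (gaussSource ε m f y) (Icc 0 b) := by
  have hpos : 0 ≤ gaussPow m y := (gaussPow_pos m hy).le
  have hmem : MapsTo (gaussPow m y * ·) (Icc 0 b) (Icc 0 (gaussPow m y * b)) := fun x hx =>
    ⟨mul_nonneg hpos hx.1, mul_le_mul_of_nonneg_left hx.2 hpos⟩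
  intro x hx x' hx' hxx'
  exact div_le_div_of_nonneg_right
    (hf (hmem hx) (hmem hx') (mul_le_mul_of_nonneg_left hxx' hpos)) (Real.rpow_nonneg hy.le m)

lemma gaussSource_zero_nonneg {y : ℝ} (hy : 0 < y) (hf : f y 0 ≤ 0) :
    0 ≤ gaussSource ε m f y 0 := by
  simpa [gaussSource] using div_nonneg (neg_nonneg.2 hf) (Real.rpow_nonneg hy.le m)

/-- The source is increasing in `V` between the barriers once the potential, which grows with `m`,
dominates the slope of `f`. -/
theorem exists_similarityOp_eq_between {q₀ q₁ V₀ V₁ H₀ H₁ : ℝ → ℝ}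
    (hf : ContinuousOn (Function.uncurry f) (Ioi 0 ×ˢ univ)) (hf_zero : ∀ y > 0, f y 0 ≤ 0)
    (hf_mono : ∀ y > 0,
      MonotoneOn (fun x => gaussPotential ε m y * x - f y x) (Icc 0 (gaussPow m y * V₁ y)))
    (h₀ : IsFluxPair (gaussWeight m) q₀ V₀ H₀) (h₁ : IsFluxPair (gaussWeight m) q₁ V₁ H₁)
    (hq₀ : ∀ y > 0, 0 ≤ q₀ y) (hle : ∀ y > 0, V₀ y ≤ V₁ y)
    (hsub : ∀ y > 0, f y (gaussPow m y * V₀ y) ≤ similarityOp ε (gaussPow m * V₀) y)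
    (hsuper : ∀ y > 0, similarityOp ε (gaussPow m * V₁) y ≤ f y (gaussPow m y * V₁ y)) :
    ∃ u : ℝ → ℝ, ContDiffOn ℝ 2 u (Ioi 0) ∧ (∀ y > 0, similarityOp ε u y = f y (u y)) ∧
      ∀ y > 0, u y ∈ Icc (gaussPow m y * V₀ y) (gaussPow m y * V₁ y) := by
  have hrpow : ∀ y > (0 : ℝ), 0 < y ^ m := fun y hy => Real.rpow_pos_of_pos hy m
  have hg := continuousOn_gaussSource (ε := ε) (m := m) hf
  obtain ⟨v, H, hv, hv_mem⟩ := exists_isFluxPair_between (continuousOn_gaussWeight m)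
    (fun y hy => (gaussWeight_pos m hy).le) hg
    (fun y hy => monotoneOn_gaussSource hy (hf_mono y hy))
    (fun y hy => gaussSource_zero_nonneg hy (hf_zero y hy)) h₀ h₁ hq₀
    (fun y hy => by
      have := hsub y hy
      rw [h₀.similarityOp_gaussPow_mul ε hy] at this
      rw [gaussSource, le_div_iff₀ (hrpow y hy)]
      linarith)
    (fun y hy => by
      have := hsuper y hy
      rw [h₁.similarityOp_gaussPow_mul ε hy] at this
      rw [gaussSource, div_le_iff₀ (hrpow y hy)]
      linarith)
    hle
  refine ⟨gaussPow m * v, hv.contDiffOn_gaussPow_mul ?_, fun y hy => ?_, fun y hy => ?_⟩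
  · exact hg.comp (f := fun y => (y, v y)) (continuousOn_id.prodMk
      (hv.continuousOn.mono Ioi_subset_Ici_self)) fun y hy => ⟨hy, mem_univ _⟩
  · rw [hv.similarityOp_gaussPow_mul ε hy, gaussSource, mul_div_cancel₀ _ (hrpow y hy).ne']
    exact sub_sub_cancel _ _
  · exact ⟨mul_le_mul_of_nonneg_left (hv_mem y hy).1 (gaussPow_pos m hy).le,
      mul_le_mul_of_nonneg_left (hv_mem y hy).2 (gaussPow_pos m hy).le⟩

theorem exists_similarityOp_eq_between_gaussPow {k l a b : ℝ} (hlm : l < m) (hk : 0 ≤ k)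
    (hkm : k < m) (ha : 0 ≤ a) (hb : 0 ≤ b)
    (hf : ContinuousOn (Function.uncurry f) (Ioi 0 ×ˢ univ)) (hf_zero : ∀ y > 0, f y 0 ≤ 0)
    (hf_mono : ∀ y > 0, MonotoneOn (fun x => gaussPotential ε m y * x - f y x)
      (Icc 0 (a * gaussPow k y + b * gaussPow l y)))
    (hsub : ∀ y > 0, f y (a * gaussPow k y) ≤ gaussPotential ε k y * (a * gaussPow k y))
    (hsuper : ∀ y > 0, gaussPotential ε k y * (a * gaussPow k y) +
      gaussPotential ε l y * (b * gaussPow l y) ≤ f y (a * gaussPow k y + b * gaussPow l y)) :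
    ∃ u : ℝ → ℝ, ContDiffOn ℝ 2 u (Ioi 0) ∧ (∀ y > 0, similarityOp ε u y = f y (u y)) ∧
      ∀ y > 0, u y ∈ Icc (a * gaussPow k y) (a * gaussPow k y + b * gaussPow l y) := by
  have h₀ := (isFluxPair_gaussPow ε hkm).const_smul a
  have h₁ := h₀.add ((isFluxPair_gaussPow ε hlm).const_smul b)
  have hmul : ∀ c j, ∀ y > 0, gaussPow m y * (c • fun x : ℝ => x ^ (m - j)) y =
      c * gaussPow j y := by
    intro c j y hy
    rw [Pi.smul_apply, smul_eq_mul, mul_left_comm, gaussPow_mul_rpow _ _ hy, sub_sub_cancel]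
  have hsource : ∀ c j, ∀ y > 0, y ^ m * (c • fun x : ℝ =>
      (gaussPotential ε m x - gaussPotential ε j x) * gaussPow j x / x ^ m) y =
      (gaussPotential ε m y - gaussPotential ε j y) * (c * gaussPow j y) := by
    intro c j y hy
    have := (Real.rpow_pos_of_pos hy m).ne'
    simp only [Pi.smul_apply, smul_eq_mul]
    field_simp
  have hV₀ : ∀ y > 0, 0 ≤ a * gaussPow k y := fun y hy => mul_nonneg ha (gaussPow_pos k hy).le
  obtain ⟨u, hu, hu_eq, hu_mem⟩ := exists_similarityOp_eq_between hf hf_zero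
    (fun y hy => by simpa only [Pi.add_apply, mul_add, hmul _ _ y hy] using hf_mono y hy) h₀ h₁
    (fun y hy => nonneg_of_mul_nonneg_right (by
      rw [hsource _ _ y hy]
      exact mul_nonneg (sub_nonneg.2 (gaussPotential_mono ε hk hkm.le y)) (hV₀ y hy))
      (Real.rpow_pos_of_pos hy m))
    (fun y hy => le_add_of_nonneg_right (mul_nonneg hb (Real.rpow_nonneg (le_of_lt hy) _)))
    (fun y hy => by
      rw [h₀.similarityOp_gaussPow_mul ε hy, hmul _ _ y hy, hsource _ _ y hy]
      linarith [hsub y hy])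
    (fun y hy => by
      rw [h₁.similarityOp_gaussPow_mul ε hy, Pi.add_apply, Pi.add_apply, mul_add,
        mul_add (y ^ m), hmul _ _ y hy, hmul _ _ y hy, hsource _ _ y hy, hsource _ _ y hy]
      linarith [hsuper y hy])
  exact ⟨u, hu, hu_eq, fun y hy => by
    simpa only [Pi.add_apply, mul_add, hmul _ _ y hy] using hu_mem y hy⟩

end GaussSource

lemma monotoneOn_mul_sub_mul_pow {K Q b : ℝ} {n : ℕ} (hQ : 0 ≤ Q)
    (h : n * Q ^ n * b ^ (n - 1) ≤ K) : MonotoneOn (fun x => K * x - (Q * x) ^ n) (Icc 0 b) := by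
  have hderiv : ∀ x, HasDerivAt (fun x => K * x - (Q * x) ^ n)
      (K - n * Q ^ n * x ^ (n - 1)) x := by
    intro x
    refine (((hasDerivAt_id x).const_mul K).sub
      (((hasDerivAt_pow n x).const_mul (Q ^ n)))).congr_deriv (by ring) |>.congr_of_eventuallyEq ?_
    exact .of_forall fun z => by simp [mul_pow]
  refine monotoneOn_of_deriv_nonneg (convex_Icc 0 b) (by fun_prop) (by fun_prop) fun x hx => ?_
  rw [interior_Icc] at hx
  have hpow : x ^ (n - 1) ≤ b ^ (n - 1) := pow_le_pow_left₀ hx.1.le hx.2.le _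
  rw [(hderiv x).deriv, sub_nonneg]
  exact (mul_le_mul_of_nonneg_left hpow (by positivity)).trans h

lemma exp_neg_sq_mul_rpow_le_four {y p : ℝ} (hy : 0 < y) (hp : 0 ≤ p) (hp2 : p ≤ 2) :
    Real.exp (-y ^ 2 / 4) * y ^ p ≤ 4 := by
  have hrpow : y ^ p ≤ 1 + y ^ 2 := by
    rcases le_total y 1 with h | h
    · linarith [Real.rpow_le_one hy.le h hp, sq_nonneg y]
    · linarith [(Real.rpow_le_rpow_of_exponent_le h hp2).trans_eq (Real.rpow_two y)]
  have hexp : y ^ 2 / 4 + 1 ≤ Real.exp (y ^ 2 / 4) := Real.add_one_le_exp _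
  rw [neg_div, Real.exp_neg, inv_mul_le_iff₀ (Real.exp_pos _)]
  linarith

section Barriers

variable {n : ℕ} {y : ℝ}

lemma two_mul_mu1_mul_lam_gaussPow_pow_le (hn : 1 < n) (hy : 0 < y) :
    (2 * mu1 y * (lam n * gaussPow (del n) y)) ^ n ≤
      gaussPotential (eps n) (del n) y * (lam n * gaussPow (del n) y) := by
  have hlam := lam_pos hn
  have hδ := del_eq hn
  have hε := eps_pos hn
  have hmu := mu1_pos hy
  have hexp : Real.exp (-y ^ 2 / 4) ≤ 1 := Real.exp_le_one_iff.2 (by nlinarith)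
  have hpot : del n * (del n + 1) / y ^ 2 ≤ gaussPotential (eps n) (del n) y := by
    rw [gaussPotential]; linarith
  calc (2 * mu1 y * (lam n * gaussPow (del n) y)) ^ n
      ≤ (2 * (kap * y) * (lam n * gaussPow (del n) y)) ^ n := by
        have := (gaussPow_pos (del n) hy).le
        gcongr
        exact mu1_le hy.le
    _ = Real.exp (-y ^ 2 / 4) ^ n * (2 * kap * y * (lam n * y ^ (-del n))) ^ n := by
        rw [gaussPow, ← mul_pow]; ring
    _ ≤ Real.exp (-y ^ 2 / 4) * (del n * (del n + 1) / y ^ 2 * (lam n * y ^ (-del n))) := by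
        rw [two_kap_mul_lam_rpow_pow hn hy]
        have := del_pos hn
        gcongr
        exact pow_le_of_le_one (Real.exp_pos _).le hexp (by omega)
    _ = del n * (del n + 1) / y ^ 2 * (lam n * gaussPow (del n) y) := by rw [gaussPow]; ring
    _ ≤ gaussPotential (eps n) (del n) y * (lam n * gaussPow (del n) y) := by
        have := (gaussPow_pos (del n) hy).le
        gcongr

lemma le_two_mul_mu1_mul_add_pow (hn : 1 < n) (hy : 0 < y) {N : ℝ} (hN : 0 ≤ N) :
    Real.exp (-y ^ 2 / 4) ^ (2 * n) *
        (del n * (del n + 1) / y ^ 2 * (lam n * y ^ (-del n) + n * N)) ≤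
      (2 * mu1 y * (lam n * gaussPow (del n) y + N * gaussPow 0 y)) ^ n := by
  have hκ := kap_pos
  have hP : 0 < lam n * y ^ (-del n) := mul_pos (lam_pos hn) (Real.rpow_pos_of_pos hy _)
  have hkey := two_kap_mul_lam_rpow_pow hn hy
  set P := lam n * y ^ (-del n) with hP_def
  set G := Real.exp (-y ^ 2 / 4)
  have hG : 0 < G := Real.exp_pos _
  have hmu : kap * y * G ≤ mu1 y := le_mu1 hy.le
  have hbern : 1 + n * (N / P) ≤ (1 + N / P) ^ n :=
    one_add_mul_le_pow (by linarith [div_nonneg hN hP.le]) n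
  calc G ^ (2 * n) * (del n * (del n + 1) / y ^ 2 * (P + n * N))
      = G ^ (2 * n) * ((2 * kap * y * P) ^ n * (1 + n * (N / P))) := by
        rw [hkey]; field_simp
    _ ≤ G ^ (2 * n) * ((2 * kap * y * P) ^ n * (1 + N / P) ^ n) := by gcongr
    _ = (2 * (kap * y * G) * (G * (P + N))) ^ n := by
        rw [pow_mul, ← mul_pow, ← mul_pow]
        congr 1
        field_simp
    _ ≤ (2 * mu1 y * (G * (P + N))) ^ n := by gcongr
    _ = (2 * mu1 y * (lam n * gaussPow (del n) y + N * gaussPow 0 y)) ^ n := by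
        rw [gaussPow_zero, gaussPow, hP_def]; ring

lemma gaussPotential_mul_add_nonpos (hn : 1 < n) (hy : 1 ≤ y) {N : ℝ}
    (hN : lam n * gaussPotential (eps n) (del n) 1 ≤ (1 / 2 - eps n) * N) :
    gaussPotential (eps n) (del n) y * (lam n * gaussPow (del n) y) +
      gaussPotential (eps n) 0 y * (N * gaussPow 0 y) ≤ 0 := by
  have hlam := lam_pos hn
  have hδ := del_pos hn
  have hε := eps_pos hn
  have hδ_eq := del_eq hn
  have hrpow : y ^ (-del n) ≤ 1 := Real.rpow_le_one_of_one_le_of_nonpos hy (by linarith)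
  have hpot : gaussPotential (eps n) (del n) y ≤ gaussPotential (eps n) (del n) 1 := by
    unfold gaussPotential; gcongr
  have hpot_pos : 0 ≤ gaussPotential (eps n) (del n) 1 := by
    have : 0 ≤ (del n - 1) / 2 := by linarith
    unfold gaussPotential; positivity
  have hmul : gaussPotential (eps n) (del n) y * (lam n * y ^ (-del n)) ≤ (1 / 2 - eps n) * N :=
    calc gaussPotential (eps n) (del n) y * (lam n * y ^ (-del n))
        ≤ gaussPotential (eps n) (del n) 1 * (lam n * 1) := by gcongr
      _ ≤ (1 / 2 - eps n) * N := by linarith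
  calc gaussPotential (eps n) (del n) y * (lam n * gaussPow (del n) y) +
        gaussPotential (eps n) 0 y * (N * gaussPow 0 y)
      = Real.exp (-y ^ 2 / 4) * (gaussPotential (eps n) (del n) y * (lam n * y ^ (-del n)) -
          (1 / 2 - eps n) * N) := by
        rw [gaussPow_zero, gaussPow, gaussPotential, gaussPotential]; ring
    _ ≤ 0 := mul_nonpos_of_nonneg_of_nonpos (Real.exp_pos _).le (sub_nonpos.2 hmul)

/-- The loss `1 - exp (-j y ^ 2) ≤ j y ^ 2` costs only `O(y ^ (-δ))`, which the term `n N / y ^ 2`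
absorbs because `δ ≤ 2`. -/
lemma gaussPotential_mul_le_exp_mul (hn : 4 ≤ n) (hy : 0 < y) (hy1 : y ≤ 1) {N j : ℝ}
    (hj : 0 ≤ j) (hN0 : 0 ≤ N)
    (hN : lam n * (del n * (del n + 1) * j + ((del n - 1) / 2 + eps n)) ≤
      Real.exp (-j) * n * (del n * (del n + 1)) * N) :
    gaussPotential (eps n) (del n) y * (lam n * y ^ (-del n)) ≤
      Real.exp (-(j * y ^ 2)) *
        (del n * (del n + 1) / y ^ 2 * (lam n * y ^ (-del n) + n * N)) := by
  have hn1 : 1 < n := by omega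
  have hlam := lam_pos hn1
  have hδ := del_pos hn1
  have hP_le : y ^ (-del n) ≤ 1 / y ^ 2 := by
    rw [one_div, ← Real.rpow_two, ← Real.rpow_neg hy.le]
    exact Real.rpow_le_rpow_of_exponent_ge hy hy1
      (by linarith [del_eq hn1, eps_le_one_third hn])
  set P := y ^ (-del n)
  set D := del n * (del n + 1) with hD
  have hP : 0 < P := Real.rpow_pos_of_pos hy _
  have : 0 < D := by positivity
  have hloss : 1 - j * y ^ 2 ≤ Real.exp (-(j * y ^ 2)) := by
    linarith [Real.add_one_le_exp (-(j * y ^ 2))]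
  have hexp_le : Real.exp (-j) ≤ Real.exp (-(j * y ^ 2)) := by
    rw [Real.exp_le_exp, neg_le_neg_iff]
    exact mul_le_of_le_one_right hj (pow_le_one₀ hy.le hy1)
  calc gaussPotential (eps n) (del n) y * (lam n * P)
      = D / y ^ 2 * (lam n * P) * (1 - j * y ^ 2) +
          P * (lam n * (D * j + ((del n - 1) / 2 + eps n))) := by
        rw [gaussPotential, ← hD]; field_simp; ring
    _ ≤ D / y ^ 2 * (lam n * P) * (1 - j * y ^ 2) + P * (Real.exp (-j) * n * D * N) := by gcongr
    _ ≤ D / y ^ 2 * (lam n * P) * Real.exp (-(j * y ^ 2)) +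
          1 / y ^ 2 * (Real.exp (-(j * y ^ 2)) * n * D * N) := by gcongr
    _ = Real.exp (-(j * y ^ 2)) * (D / y ^ 2 * (lam n * P + n * N)) := by ring

lemma gaussPotential_mul_le_pow_of_le_one (hn : 4 ≤ n) (hy : 0 < y) (hy1 : y ≤ 1) {N j : ℝ}
    (hj : j = (2 * n - 1) / 4) (hN0 : 0 ≤ N)
    (hN : lam n * (del n * (del n + 1) * j + ((del n - 1) / 2 + eps n)) ≤
      Real.exp (-j) * n * (del n * (del n + 1)) * N) :
    gaussPotential (eps n) (del n) y * (lam n * gaussPow (del n) y) ≤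
      (2 * mu1 y * (lam n * gaussPow (del n) y + N * gaussPow 0 y)) ^ n := by
  have hj0 : 0 ≤ j := by
    have : (4 : ℝ) ≤ n := by exact_mod_cast hn
    rw [hj]; linarith
  have hexp : Real.exp (-y ^ 2 / 4) ^ (2 * n) =
      Real.exp (-y ^ 2 / 4) * Real.exp (-(j * y ^ 2)) := by
    rw [← Real.exp_nat_mul, ← Real.exp_add, hj]
    congr 1; push_cast; ring
  calc gaussPotential (eps n) (del n) y * (lam n * gaussPow (del n) y)
      = Real.exp (-y ^ 2 / 4) *
          (gaussPotential (eps n) (del n) y * (lam n * y ^ (-del n))) := by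
        rw [gaussPow]; ring
    _ ≤ Real.exp (-y ^ 2 / 4) * (Real.exp (-(j * y ^ 2)) *
          (del n * (del n + 1) / y ^ 2 * (lam n * y ^ (-del n) + n * N))) :=
        mul_le_mul_of_nonneg_left (gaussPotential_mul_le_exp_mul hn hy hy1 hj0 hN0 hN)
          (Real.exp_pos _).le
    _ = Real.exp (-y ^ 2 / 4) ^ (2 * n) *
          (del n * (del n + 1) / y ^ 2 * (lam n * y ^ (-del n) + n * N)) := by
        rw [hexp]; ring
    _ ≤ (2 * mu1 y * (lam n * gaussPow (del n) y + N * gaussPow 0 y)) ^ n :=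
        le_two_mul_mu1_mul_add_pow (by omega) hy hN0

lemma exists_gaussPotential_mul_add_le_pow (hn : 4 ≤ n) : ∃ N > 0, ∀ y > 0,
    gaussPotential (eps n) (del n) y * (lam n * gaussPow (del n) y) +
        gaussPotential (eps n) 0 y * (N * gaussPow 0 y) ≤
      (2 * mu1 y * (lam n * gaussPow (del n) y + N * gaussPow 0 y)) ^ n := by
  have hn1 : 1 < n := by omega
  have hlam := lam_pos hn1
  have hδ := del_pos hn1
  have hε : 0 < 1 / 2 - eps n := by linarith [eps_le_one_third hn]
  have hcoef : 0 < Real.exp (-((2 * n - 1) / 4 : ℝ)) * n * (del n * (del n + 1)) := by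
    have : (0 : ℝ) < n := by exact_mod_cast Nat.zero_lt_of_lt hn1
    positivity
  have h_far := (tendsto_id.const_mul_atTop hε).eventually_ge_atTop
    (lam n * gaussPotential (eps n) (del n) 1)
  have h_near := (tendsto_id.const_mul_atTop hcoef).eventually_ge_atTop
    (lam n * (del n * (del n + 1) * ((2 * n - 1) / 4) + ((del n - 1) / 2 + eps n)))
  obtain ⟨N, hN, hN_far, hN_near⟩ := ((eventually_gt_atTop 0).and (h_far.and h_near)).exists
  refine ⟨N, hN, fun y hy => ?_⟩
  have hmu := mu1_pos hy
  have hgauss := gaussPow_pos (del n) hy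
  have hgauss₀ := gaussPow_pos 0 hy
  rcases le_total 1 y with hy1 | hy1
  · exact (gaussPotential_mul_add_nonpos hn1 hy1 hN_far).trans (by positivity)
  · have hpot : gaussPotential (eps n) 0 y ≤ 0 := by
      rw [gaussPotential, zero_mul, zero_div]; linarith
    exact (add_le_of_nonpos_right (mul_nonpos_of_nonpos_of_nonneg hpot (by positivity))).trans
      (gaussPotential_mul_le_pow_of_le_one hn hy hy1 rfl hN.le hN_near)

lemma exists_slope_le_div_sq (hn : 4 ≤ n) {N : ℝ} (hN : 0 ≤ N) : ∃ B ≥ 0, ∀ y > 0,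
    n * (2 * mu1 y) ^ n * (lam n * gaussPow (del n) y + N * gaussPow 0 y) ^ (n - 1) ≤
      B / y ^ 2 := by
  have hn1 : 1 < n := by omega
  have hlam := lam_pos hn1
  have hδ := del_pos hn1
  refine ⟨n * (del n * (del n + 1)) * (1 + 4 * N / lam n) ^ (n - 1), by positivity,
    fun y hy => ?_⟩
  have hmu := mu1_pos hy
  have hgauss := gaussPow_pos (del n) hy
  have hgauss₀ := gaussPow_pos 0 hy
  set P := y ^ (-del n) with hP
  have hPpos : 0 < P := Real.rpow_pos_of_pos hy _
  have hbarrier : lam n * gaussPow (del n) y + N * gaussPow 0 y ≤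
      lam n * P * (1 + 4 * N / lam n) := by
    have hexp : Real.exp (-y ^ 2 / 4) ≤ 1 := Real.exp_le_one_iff.2 (by nlinarith)
    have hdecay := exp_neg_sq_mul_rpow_le_four hy hδ.le
      (by linarith [del_eq hn1, eps_le_one_third hn])
    have hinv : P * y ^ del n = 1 := by rw [hP, ← Real.rpow_add hy]; simp
    calc lam n * gaussPow (del n) y + N * gaussPow 0 y
        = lam n * (P * Real.exp (-y ^ 2 / 4)) +
            N * (P * (Real.exp (-y ^ 2 / 4) * y ^ del n)) := by
          rw [gaussPow_zero, gaussPow]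
          linear_combination (-N * Real.exp (-y ^ 2 / 4)) * hinv
      _ ≤ lam n * (P * 1) + N * (P * 4) := by gcongr
      _ = lam n * P * (1 + 4 * N / lam n) := by field_simp
  have hkey : (2 * kap * y) ^ n * (lam n * P) ^ (n - 1) = del n * (del n + 1) / y ^ 2 := by
    refine mul_right_cancel₀ (mul_pos hlam hPpos).ne' ?_
    rw [mul_assoc, pow_sub_one_mul (by omega), ← mul_pow, two_kap_mul_lam_rpow_pow hn1 hy]
  calc n * (2 * mu1 y) ^ n * (lam n * gaussPow (del n) y + N * gaussPow 0 y) ^ (n - 1)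
      ≤ n * (2 * (kap * y)) ^ n * (lam n * P * (1 + 4 * N / lam n)) ^ (n - 1) := by
        have hκ := kap_pos
        have hmu_le := mu1_le hy.le
        gcongr
    _ = n * ((2 * kap * y) ^ n * (lam n * P) ^ (n - 1)) * (1 + 4 * N / lam n) ^ (n - 1) := by
        rw [mul_pow (lam n * P)]; ring
    _ = n * (del n * (del n + 1)) * (1 + 4 * N / lam n) ^ (n - 1) / y ^ 2 := by
        rw [hkey]; ring

end Barriers

lemma isDiffusiveProfile_of_mem_Icc {n : ℕ} (hn : 1 < n) {u : ℝ → ℝ} {N : ℝ}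
    (hu : ContDiffOn ℝ 2 u (Ioi 0))
    (hu_eq : ∀ y > 0, similarityOp (eps n) u y = (2 * mu1 y * u y) ^ n)
    (hu_mem : ∀ y > 0, u y ∈ Icc (lam n * gaussPow (del n) y)
      (lam n * gaussPow (del n) y + N * gaussPow 0 y)) : IsDiffusiveProfile n u := by
  have hlam := lam_pos hn
  have hpos : ∀ y > 0, 0 < u y := fun y hy =>
    (mul_pos hlam (gaussPow_pos _ hy)).trans_le (hu_mem y hy).1
  have hrpow : ∀ a, ∀ y > 0, y ^ a * u y ∈ Icc (lam n * gaussPow (del n - a) y)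
      (lam n * gaussPow (del n - a) y + N * gaussPow (-a) y) := by
    intro a y hy
    have ha : 0 ≤ y ^ a := Real.rpow_nonneg (le_of_lt hy) a
    have hlower := mul_le_mul_of_nonneg_left (hu_mem y hy).1 ha
    have hupper := mul_le_mul_of_nonneg_left (hu_mem y hy).2 ha
    rw [← zero_sub a, ← gaussPow_mul_rpow _ _ hy, ← gaussPow_mul_rpow _ _ hy]
    constructor <;> linarith
  refine ⟨hu, hpos, hu_eq, ?_, ?_⟩
  · have hzero : ∀ {k : ℝ}, k ≤ 0 → Tendsto (gaussPow k) (𝓝[>] 0) (𝓝 (gaussPow k 0)) :=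
      fun hk => (continuous_gaussPow hk).continuousAt.mono_left nhdsWithin_le_nhds
    have hδ := del_pos hn
    have hgauss : gaussPow (del n - del n) 0 = 1 := by simp [gaussPow]
    have hgauss' : gaussPow (-del n) 0 = 0 := by simp [gaussPow, hδ.ne']
    have hlower := (hzero (sub_self (del n)).le).const_mul (lam n)
    have hupper := hlower.add ((hzero (neg_nonpos.2 hδ.le)).const_mul N)
    rw [hgauss, mul_one] at hlower
    rw [hgauss, hgauss', mul_one, mul_zero, add_zero] at hupper
    exact tendsto_of_tendsto_of_tendsto_of_le_of_le' hlower hupper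
      (eventually_mem_nhdsWithin.mono fun y hy => (hrpow _ y hy).1)
      (eventually_mem_nhdsWithin.mono fun y hy => (hrpow _ y hy).2)
  · have hupper := ((tendsto_gaussPow_atTop (del n - 2 * eps n)).const_mul (lam n)).add
      ((tendsto_gaussPow_atTop (-(2 * eps n))).const_mul N)
    rw [mul_zero, mul_zero, add_zero] at hupper
    refine squeeze_zero' ?_ ?_ hupper
    · filter_upwards [eventually_gt_atTop 0] with y hy
      exact mul_nonneg (Real.rpow_nonneg hy.le _) (hpos y hy).le
    · filter_upwards [eventually_gt_atTop 0] with y hy using (hrpow _ y hy).2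

theorem exists_isDiffusiveProfile {n : ℕ} (hn : 4 ≤ n) : ∃ u : ℝ → ℝ, IsDiffusiveProfile n u := by
  have hn1 : 1 < n := by omega
  have hδ := del_pos hn1
  have hε := eps_pos hn1
  obtain ⟨N, hN, hsuper⟩ := exists_gaussPotential_mul_add_le_pow hn
  obtain ⟨B, hB, hslope⟩ := exists_slope_le_div_sq hn hN.le
  obtain ⟨m, hm⟩ : ∃ m, m = B + del n + 1 := ⟨_, rfl⟩
  have hδm : del n < m := by linarith
  have hpot : ∀ y : ℝ, B / y ^ 2 ≤ gaussPotential (eps n) m y := by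
    intro y
    have h : B / y ^ 2 ≤ m * (m + 1) / y ^ 2 := by gcongr; nlinarith
    rw [gaussPotential]
    linarith
  have hcont : Continuous (Function.uncurry fun y x => (2 * mu1 y * x) ^ n) := by
    have := continuous_mu1
    unfold Function.uncurry
    fun_prop
  obtain ⟨u, hu, hu_eq, hu_mem⟩ := exists_similarityOp_eq_between_gaussPow
    (hδ.trans hδm) hδ.le hδm (lam_pos hn1).le hN.le hcont.continuousOn
    (fun y _ => by rw [mul_zero, zero_pow (by omega)])
    (fun y hy => monotoneOn_mul_sub_mul_pow (mul_nonneg zero_le_two (mu1_pos hy).le)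
      ((hslope y hy).trans (hpot y)))
    (fun y hy => two_mul_mu1_mul_lam_gaussPow_pow_le hn1 hy) hsuper
  exact ⟨u, isDiffusiveProfile_of_mem_Icc hn1 hu hu_eq hu_mem⟩

/-- For every integer n ≥ 4 there exists a unique diffusive profile μ₂. -/
theorem diffusive_profile_exists_unique (n : ℕ) (hn : 4 ≤ n) :
    (∃ μ : ℝ → ℝ, IsDiffusiveProfile n μ) ∧
    (∀ μ μ' : ℝ → ℝ, IsDiffusiveProfile n μ → IsDiffusiveProfile n μ' →
      Set.EqOn μ μ' (Set.Ioi 0)) := by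
  refine ⟨exists_isDiffusiveProfile hn, fun u w hu hw y hy => ?_⟩
  exact le_antisymm (le_of_isDiffusiveProfile hn hu hw hy) (le_of_isDiffusiveProfile hn hw hu hy)
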